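/- There exist absolute constants 0 < c ≤ C such that for every θ ∈ (0,1) and every positive integer n, c · n^{(3-θ)/2} θ^{-1} (1-θ)^{-2} ≤ ∫_{A} G(s,t,u,v) ds dt du dv ≤ C · n^{(3-θ)/2} θ^{-1} (1-θ)^{-2}, where A = { (s,t,u,v) ∈ (0,∞)⁴ : 0 < u < 1, v ≥ n^{1/2}, t < 1, s ≥ n^{1/4} u^{1/2} t }. -/

import Mathlib

open MeasureTheory Set Real

/-- The integrand `G(s,t,u,v)` from the paper's computation of the completely 1-summing
norm of the identity `OH_n → ℓ^n_p`, with `θ = 2/p'`. Here `p = (s, t, u, v)`. -/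
noncomputable def G (θ : ℝ) (n : ℕ) (p : ℝ × ℝ × ℝ × ℝ) : ℝ :=
  (n : ℝ) ^ (2 : ℕ) * p.1 ^ (-1 - 2 * θ) * p.2.1 ^ (-1 - 2 * θ) *
    min (min (min ((n : ℝ)⁻¹ * p.1 ^ (4 : ℝ) * p.2.2.1 ^ (-2 : ℝ) * p.2.2.2 ^ (-2 : ℝ))
                  ((n : ℝ)⁻¹ * p.2.1 ^ (4 : ℝ)))
             (min (p.1 ^ (4 : ℝ) * p.2.2.1 ^ (-2 : ℝ)) (p.2.1 ^ (4 : ℝ) * p.2.2.2 ^ (-2 : ℝ))))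
        (min (min (p.2.2.1 ^ (-2 : ℝ) * p.2.2.2 ^ (-2 : ℝ)) (p.2.2.1 ^ (-2 : ℝ)))
             (min 1 (p.2.2.2 ^ (-2 : ℝ))))

/-- The region of integration. -/
def A (n : ℕ) : Set (ℝ × ℝ × ℝ × ℝ) :=
  {p | 0 < p.1 ∧ 0 < p.2.1 ∧ 0 < p.2.2.1 ∧ 0 < p.2.2.2 ∧ p.2.2.1 < 1 ∧ (n : ℝ) ^ ((1:ℝ)/2) ≤ p.2.2.2 ∧ p.2.1 < 1 ∧ (n : ℝ) ^ ((1:ℝ)/4) * p.2.2.1 ^ ((1:ℝ)/2) * p.2.1 ≤ p.1}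

/-! On `A n` the minimum in `G` is `t⁴ v⁻²`, so `G` is there a product of powers of `s`, `t`, `v`.
Integrating `s ^ (-1 - 2θ)` over `s ≥ n ^ (1/4) u ^ (1/2) t` gives
`n ^ (-θ/2) u ^ (-θ) t ^ (-2θ) / (2θ)`, again a product of powers, and the remaining domain is
the box `(0,1) × (0,1) × [n ^ (1/2), ∞)`. The `t` and `u` integrals each contribute a factor
`(1 - θ)⁻¹`, so the integral is exactly `1/8` times the claimed order of magnitude. Everything is
computed in `[0, ∞]`, where Tonelli needs no integrability; the finite value then yields it. -/

section PowerIntegrals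

lemma lintegral_Ioo_zero_rpow {b r : ℝ} (hb : 0 ≤ b) (hr : -1 < r) :
    ∫⁻ x in Ioo 0 b, ENNReal.ofReal (x ^ r) = ENNReal.ofReal (b ^ (r + 1) / (r + 1)) := by
  have hint : IntegrableOn (fun x : ℝ ↦ x ^ r) (Ioc 0 b) :=
    (intervalIntegrable_iff_integrableOn_Ioc_of_le hb).mp
      (intervalIntegral.intervalIntegrable_rpow' hr)
  have hnonneg : 0 ≤ᵐ[volume.restrict (Ioc 0 b)] fun x : ℝ ↦ x ^ r :=
    ae_restrict_of_forall_mem measurableSet_Ioc fun x hx ↦ rpow_nonneg hx.1.le r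
  rw [restrict_Ioo_eq_restrict_Ioc, ← ofReal_integral_eq_lintegral_ofReal hint hnonneg,
    ← intervalIntegral.integral_of_le hb, integral_rpow (Or.inl hr),
    zero_rpow (by linarith), sub_zero]

lemma lintegral_Ici_rpow_of_lt {a r : ℝ} (ha : 0 < a) (hr : r < -1) :
    ∫⁻ x in Ici a, ENNReal.ofReal (x ^ r) = ENNReal.ofReal (-a ^ (r + 1) / (r + 1)) := by
  have hnonneg : 0 ≤ᵐ[volume.restrict (Ioi a)] fun x : ℝ ↦ x ^ r :=
    ae_restrict_of_forall_mem measurableSet_Ioi fun x hx ↦ rpow_nonneg (ha.trans hx).le r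
  rw [← restrict_Ioi_eq_restrict_Ici,
    ← ofReal_integral_eq_lintegral_ofReal (integrableOn_Ioi_rpow_of_lt hr ha) hnonneg,
    integral_Ioi_rpow_of_lt hr ha]

end PowerIntegrals

section ProductMeasures

variable {α β : Type*} [MeasurableSpace α] [MeasurableSpace β]
  {μ : Measure α} {ν : Measure β} [SFinite μ] [SFinite ν]

lemma setLIntegral_prod_mul {s : Set α} {t : Set β} {f : α → ENNReal} {g : β → ENNReal}
    (hf : AEMeasurable f (μ.restrict s)) (hg : AEMeasurable g (ν.restrict t)) :
    ∫⁻ z in s ×ˢ t, f z.1 * g z.2 ∂(μ.prod ν) = (∫⁻ x in s, f x ∂μ) * ∫⁻ y in t, g y ∂ν := by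
  rw [← Measure.prod_restrict, lintegral_prod_mul hf hg]

lemma setLIntegral_prod_eq_lintegral_sections {S : Set (α × β)} {B : Set β} {T : β → Set α}
    {f : α × β → ENNReal} (hS : MeasurableSet S) (hB : MeasurableSet B)
    (mem_iff : ∀ x y, (x, y) ∈ S ↔ y ∈ B ∧ x ∈ T y)
    (hf : AEMeasurable f ((μ.prod ν).restrict S)) :
    ∫⁻ p in S, f p ∂(μ.prod ν) = ∫⁻ y in B, ∫⁻ x in T y, f (x, y) ∂μ ∂ν := by
  rw [← lintegral_indicator hS, lintegral_prod_symm _ ((aemeasurable_indicator_iff hS).mpr hf),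
    ← lintegral_indicator hB]
  refine lintegral_congr fun y ↦ ?_
  by_cases hy : y ∈ B
  · have section_eq : (fun x ↦ (x, y)) ⁻¹' S = T y := by
      ext x
      simp only [mem_preimage, mem_iff, hy, true_and]
    have hT : MeasurableSet (T y) := section_eq ▸ measurable_prodMk_right hS
    rw [indicator_of_mem hy, ← lintegral_indicator hT, ← section_eq]
    rfl
  · rw [indicator_of_notMem hy, ← lintegral_zero (μ := μ)]
    refine lintegral_congr fun x ↦ indicator_of_notMem ?_ f
    exact fun hx ↦ hy ((mem_iff x y).mp hx).1

end ProductMeasures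

section Inequalities

/-- Applied to the minimum in `G` with `m = n⁻¹`, `S = s⁴`, `T = t⁴`, `U = u⁻²`, `V = v⁻²`. -/
lemma min_eq_mul_of_le {m S T U V : ℝ} (hm : m ≤ 1) (hS : 0 ≤ S) (hT : 0 ≤ T) (hT1 : T ≤ 1)
    (hU : 1 ≤ U) (hV : 0 ≤ V) (hVm : V ≤ m) (hTS : T ≤ m * S * U) :
    min (min (min (m * S * U * V) (m * T)) (min (S * U) (T * V)))
      (min (min (U * V) U) (min 1 V)) = T * V := by
  have TV_le_V : T * V ≤ V := mul_le_of_le_one_left hV hT1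
  have TV_le_T : T * V ≤ T := mul_le_of_le_one_right hT (hVm.trans hm)
  have TV_le_mSUV : T * V ≤ m * S * U * V := mul_le_mul_of_nonneg_right hTS hV
  have TV_le_mT : T * V ≤ m * T := by
    rw [mul_comm]
    exact mul_le_mul_of_nonneg_right hVm hT
  have mSU_le_SU : m * S * U ≤ S * U := by
    rw [mul_assoc]
    exact mul_le_of_le_one_left (by positivity) hm
  have V_le_UV : V ≤ U * V := le_mul_of_one_le_left hV hU
  apply le_antisymm
  · exact (min_le_left _ _).trans ((min_le_right _ _).trans (min_le_right _ _))
  · simp only [le_min_iff]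
    refine ⟨⟨⟨TV_le_mSUV, TV_le_mT⟩, ?_, le_rfl⟩, ⟨?_, ?_⟩, ?_, TV_le_V⟩ <;> linarith

lemma rpow_neg_two_le_inv_of_rpow_half_le {a v : ℝ} (ha : 0 < a) (h : a ^ ((1 : ℝ) / 2) ≤ v) :
    v ^ (-2 : ℝ) ≤ a⁻¹ := by
  calc v ^ (-2 : ℝ) ≤ (a ^ ((1 : ℝ) / 2)) ^ (-2 : ℝ) :=
        rpow_le_rpow_of_nonpos (by positivity) h (by norm_num)
    _ = a⁻¹ := by
        rw [← rpow_mul ha.le, ← rpow_neg_one]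
        norm_num

lemma rpow_four_le_of_mul_rpow_le {a s t u : ℝ} (ha : 0 < a) (ht : 0 ≤ t) (hu : 0 < u)
    (h : a ^ ((1 : ℝ) / 4) * u ^ ((1 : ℝ) / 2) * t ≤ s) :
    t ^ (4 : ℝ) ≤ a⁻¹ * s ^ (4 : ℝ) * u ^ (-2 : ℝ) := by
  have pow_le : a * u ^ (2 : ℝ) * t ^ (4 : ℝ) ≤ s ^ (4 : ℝ) := by
    calc a * u ^ (2 : ℝ) * t ^ (4 : ℝ)
        = (a ^ ((1 : ℝ) / 4) * u ^ ((1 : ℝ) / 2) * t) ^ (4 : ℝ) := by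
          rw [mul_rpow (by positivity) ht, mul_rpow (by positivity) (by positivity),
            ← rpow_mul ha.le, ← rpow_mul hu.le]
          norm_num
      _ ≤ s ^ (4 : ℝ) := rpow_le_rpow (by positivity) h (by norm_num)
  calc t ^ (4 : ℝ) = a⁻¹ * (a * u ^ (2 : ℝ) * t ^ (4 : ℝ)) * u ^ (-2 : ℝ) := by
        rw [rpow_neg hu.le]
        field_simp
    _ ≤ a⁻¹ * s ^ (4 : ℝ) * u ^ (-2 : ℝ) := by gcongr

end Inequalities

section Region

variable {n : ℕ}

/-- The projection of `A n` to the coordinates `(t, u, v)`; the integral over `A n` is iterated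
with `s` innermost, leaving this box as the outer domain. -/
def baseBox (n : ℕ) : Set (ℝ × ℝ × ℝ) :=
  Ioo 0 1 ×ˢ Ioo 0 1 ×ˢ Ici ((n : ℝ) ^ ((1 : ℝ) / 2))

/-- The lower limit `n ^ (1/4) u ^ (1/2) t` of the inner integral over `s`, at `y = (t, u, v)`. -/
noncomputable def lowerS (n : ℕ) (y : ℝ × ℝ × ℝ) : ℝ :=
  (n : ℝ) ^ ((1 : ℝ) / 4) * y.2.1 ^ ((1 : ℝ) / 2) * y.1

lemma measurableSet_baseBox (n : ℕ) : MeasurableSet (baseBox n) :=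
  measurableSet_Ioo.prod (measurableSet_Ioo.prod measurableSet_Ici)

lemma lowerS_pos (hn : 0 < n) {y : ℝ × ℝ × ℝ} (hy : y ∈ baseBox n) : 0 < lowerS n y := by
  obtain ⟨⟨ht, -⟩, ⟨hu, -⟩, -⟩ := hy
  unfold lowerS
  positivity

lemma mem_A_iff (hn : 0 < n) (s : ℝ) (y : ℝ × ℝ × ℝ) :
    (s, y) ∈ A n ↔ y ∈ baseBox n ∧ s ∈ Ici (lowerS n y) := by
  constructor
  · rintro ⟨-, ht, hu, -, hu1, hnv, ht1, hs⟩
    exact ⟨⟨⟨ht, ht1⟩, ⟨hu, hu1⟩, hnv⟩, hs⟩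
  · rintro ⟨hy, hs⟩
    have s_pos : 0 < s := (lowerS_pos hn hy).trans_le hs
    obtain ⟨⟨ht, ht1⟩, ⟨hu, hu1⟩, hnv⟩ := hy
    have v_pos : 0 < y.2.2 := lt_of_lt_of_le (by positivity) hnv
    exact ⟨s_pos, ht, hu, v_pos, hu1, hnv, ht1, hs⟩

lemma measurableSet_A (n : ℕ) : MeasurableSet (A n) := by
  unfold A
  measurability

end Region

section Integrand

variable {n : ℕ} {θ s t u v : ℝ}

lemma measurable_G (θ : ℝ) (n : ℕ) : Measurable (G θ n) := by
  unfold G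
  fun_prop

lemma G_eq_of_mem_A (hn : 0 < n) (h : (s, t, u, v) ∈ A n) :
    G θ n (s, t, u, v) =
      (n : ℝ) ^ (2 : ℕ) * t ^ (3 - 2 * θ) * v ^ (-2 : ℝ) * s ^ (-1 - 2 * θ) := by
  obtain ⟨hs, ht, hu, hv, hu1, hnv, ht1, hts⟩ := h
  dsimp only at hs ht hu hv hu1 hnv ht1 hts
  have n_pos : (0 : ℝ) < n := by exact_mod_cast hn
  have inv_n_le_one : (n : ℝ)⁻¹ ≤ 1 := inv_le_one_of_one_le₀ (by exact_mod_cast hn)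
  have min_eq := min_eq_mul_of_le inv_n_le_one (rpow_nonneg hs.le 4) (rpow_nonneg ht.le 4)
    (rpow_le_one ht.le ht1.le (by norm_num))
    (one_le_rpow_of_pos_of_le_one_of_nonpos hu hu1.le (by norm_num)) (rpow_nonneg hv.le (-2))
    (rpow_neg_two_le_inv_of_rpow_half_le n_pos hnv) (rpow_four_le_of_mul_rpow_le n_pos ht.le hu hts)
  have t_rpow : t ^ (3 - 2 * θ) = t ^ (-1 - 2 * θ) * t ^ (4 : ℝ) := by
    rw [← rpow_add ht]
    ring_nf
  simp only [G, min_eq, t_rpow]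
  ring

lemma G_nonneg_of_mem_A {p : ℝ × ℝ × ℝ × ℝ} (hp : p ∈ A n) : 0 ≤ G θ n p := by
  obtain ⟨hs, ht, hu, hv, -⟩ := hp
  unfold G
  positivity

end Integrand

section Integral

variable {n : ℕ} {θ : ℝ}

lemma lowerS_rpow {y : ℝ × ℝ × ℝ} (ht : 0 ≤ y.1) (hu : 0 ≤ y.2.1) (r : ℝ) :
    lowerS n y ^ r = (n : ℝ) ^ (r / 4) * y.2.1 ^ (r / 2) * y.1 ^ r := by
  unfold lowerS
  rw [mul_rpow (by positivity) ht, mul_rpow (by positivity) (by positivity),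
    ← rpow_mul n.cast_nonneg, ← rpow_mul hu]
  ring_nf

lemma lintegral_G_section (hn : 0 < n) (hθ : 0 < θ) {y : ℝ × ℝ × ℝ} (hy : y ∈ baseBox n) :
    ∫⁻ s in Ici (lowerS n y), ENNReal.ofReal (G θ n (s, y)) =
      ENNReal.ofReal ((n : ℝ) ^ (2 - θ / 2) / (2 * θ)) *
        (ENNReal.ofReal (y.1 ^ (3 - 4 * θ)) *
          (ENNReal.ofReal (y.2.1 ^ (-θ)) * ENNReal.ofReal (y.2.2 ^ (-2 : ℝ)))) := by
  have lower_pos := lowerS_pos hn hy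
  have G_eq : ∀ s ∈ Ici (lowerS n y), ENNReal.ofReal (G θ n (s, y)) =
      ENNReal.ofReal ((n : ℝ) ^ (2 : ℕ) * y.1 ^ (3 - 2 * θ) * y.2.2 ^ (-2 : ℝ)) *
        ENNReal.ofReal (s ^ (-1 - 2 * θ)) := fun s hs ↦ by
    rw [G_eq_of_mem_A hn ((mem_A_iff hn s y).mpr ⟨hy, hs⟩),
      ENNReal.ofReal_mul' (rpow_nonneg (lower_pos.trans_le hs).le _)]
  obtain ⟨⟨ht, -⟩, ⟨hu, -⟩, hnv⟩ := hy
  have n_pos : (0 : ℝ) < n := by exact_mod_cast hn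
  have v_pos : 0 < y.2.2 := lt_of_lt_of_le (by positivity) hnv
  have n_rpow : (n : ℝ) ^ (2 - θ / 2) = (n : ℝ) ^ (2 : ℕ) * (n : ℝ) ^ (-θ / 2) := by
    rw [← rpow_natCast, ← rpow_add n_pos]
    push_cast
    ring_nf
  have t_rpow : y.1 ^ (3 - 4 * θ) = y.1 ^ (3 - 2 * θ) * y.1 ^ (-2 * θ) := by
    rw [← rpow_add ht]
    ring_nf
  rw [setLIntegral_congr_fun measurableSet_Ici G_eq, lintegral_const_mul _ (by fun_prop),
    lintegral_Ici_rpow_of_lt lower_pos (by linarith), show -1 - 2 * θ + 1 = -2 * θ by ring,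
    lowerS_rpow ht.le hu.le, show -2 * θ / 4 = -θ / 2 by ring, show -2 * θ / 2 = -θ by ring,
    n_rpow, t_rpow, ← ENNReal.ofReal_mul (by positivity), ← ENNReal.ofReal_mul (by positivity),
    ← ENNReal.ofReal_mul (by positivity), ← ENNReal.ofReal_mul (by positivity)]
  congr 1
  field_simp

lemma lintegral_baseBox_rpow {a b c : ℝ} (hn : 0 < n) (ha : -1 < a) (hb : -1 < b) (hc : c < -1) :
    ∫⁻ y in baseBox n, ENNReal.ofReal (y.1 ^ a) *
        (ENNReal.ofReal (y.2.1 ^ b) * ENNReal.ofReal (y.2.2 ^ c)) =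
      ENNReal.ofReal ((n : ℝ) ^ ((c + 1) / 2) / ((a + 1) * (b + 1) * (-1 - c))) := by
  have a_pos : 0 < a + 1 := by linarith
  have b_pos : 0 < b + 1 := by linarith
  have c_pos : 0 < -1 - c := by linarith
  have lintegral_v : ∫⁻ v in Ici ((n : ℝ) ^ ((1 : ℝ) / 2)), ENNReal.ofReal (v ^ c) =
      ENNReal.ofReal ((n : ℝ) ^ ((c + 1) / 2) / (-1 - c)) := by
    rw [lintegral_Ici_rpow_of_lt (by positivity) hc, ← rpow_mul n.cast_nonneg,
      show (1 : ℝ) / 2 * (c + 1) = (c + 1) / 2 by ring, neg_div, ← div_neg, neg_add']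
    ring_nf
  rw [baseBox, Measure.volume_eq_prod,
    setLIntegral_prod_mul (f := fun t : ℝ ↦ ENNReal.ofReal (t ^ a))
      (g := fun z : ℝ × ℝ ↦ ENNReal.ofReal (z.1 ^ b) * ENNReal.ofReal (z.2 ^ c))
      (by fun_prop) (by fun_prop),
    Measure.volume_eq_prod,
    setLIntegral_prod_mul (f := fun u : ℝ ↦ ENNReal.ofReal (u ^ b))
      (g := fun v : ℝ ↦ ENNReal.ofReal (v ^ c)) (by fun_prop) (by fun_prop),
    lintegral_Ioo_zero_rpow zero_le_one ha, lintegral_Ioo_zero_rpow zero_le_one hb, lintegral_v,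
    ← ENNReal.ofReal_mul (by positivity), ← ENNReal.ofReal_mul (by positivity)]
  congr 1
  simp only [one_rpow]
  field_simp

lemma lintegral_G_A (hn : 0 < n) (hθ : 0 < θ) (hθ1 : θ < 1) :
    ∫⁻ p in A n, ENNReal.ofReal (G θ n p) =
      ENNReal.ofReal (1 / 8 * ((n : ℝ) ^ ((3 - θ) / 2) * θ ^ (-1 : ℝ) * (1 - θ) ^ (-2 : ℝ))) := by
  have n_pos : (0 : ℝ) < n := by exact_mod_cast hn
  have one_sub_pos : 0 < 1 - θ := by linarith
  have n_rpow : (n : ℝ) ^ ((3 - θ) / 2) = (n : ℝ) ^ (2 - θ / 2) * (n : ℝ) ^ ((-2 + 1 : ℝ) / 2) := by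
    rw [← rpow_add n_pos]
    ring_nf
  rw [Measure.volume_eq_prod, setLIntegral_prod_eq_lintegral_sections (measurableSet_A n)
      (measurableSet_baseBox n) (mem_A_iff hn) (measurable_G θ n).ennreal_ofReal.aemeasurable,
    setLIntegral_congr_fun (measurableSet_baseBox n) fun y hy ↦ lintegral_G_section hn hθ hy,
    lintegral_const_mul _ (by fun_prop),
    lintegral_baseBox_rpow hn (by linarith) (by linarith) (by norm_num),
    ← ENNReal.ofReal_mul (by positivity), n_rpow, rpow_neg_one, rpow_neg one_sub_pos.le, rpow_two,
    show 3 - 4 * θ + 1 = 4 * (1 - θ) by ring, show -θ + 1 = 1 - θ by ring]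
  congr 1
  field_simp
  norm_num

lemma integral_G_A (hn : 0 < n) (hθ : 0 < θ) (hθ1 : θ < 1) :
    ∫ p in A n, G θ n p =
      1 / 8 * ((n : ℝ) ^ ((3 - θ) / 2) * θ ^ (-1 : ℝ) * (1 - θ) ^ (-2 : ℝ)) := by
  have G_nonneg : 0 ≤ᵐ[volume.restrict (A n)] G θ n :=
    ae_restrict_of_forall_mem (measurableSet_A n) fun _ hp ↦ G_nonneg_of_mem_A hp
  rw [integral_eq_lintegral_of_nonneg_ae G_nonneg (measurable_G θ n).aestronglyMeasurable,
    lintegral_G_A hn hθ hθ1, ENNReal.toReal_ofReal]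
  have := sub_pos.mpr hθ1
  positivity

end Integral

theorem stmt_12 :
    ∃ c C : ℝ, 0 < c ∧ c ≤ C ∧ ∀ θ : ℝ, 0 < θ → θ < 1 → ∀ n : ℕ, 0 < n →
      c * ((n : ℝ) ^ ((3 - θ) / 2) * θ ^ (-1 : ℝ) * (1 - θ) ^ (-2 : ℝ)) ≤ (∫ p in A n, G θ n p) ∧
      (∫ p in A n, G θ n p) ≤ C * ((n : ℝ) ^ ((3 - θ) / 2) * θ ^ (-1 : ℝ) * (1 - θ) ^ (-2 : ℝ)) := by
  refine ⟨1 / 8, 1 / 8, by norm_num, le_rfl, fun θ hθ hθ1 n hn ↦ ?_⟩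
  have integral_eq := integral_G_A hn hθ hθ1
  exact ⟨integral_eq.ge, integral_eq.le⟩
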